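/- If A and B are positive self-adjoint bounded operators on a Hilbert space and r ∈ (0,1], then ‖A^r − B^r‖ ≤ ‖A − B‖^r. -/

import Mathlib

set_option synthInstance.maxHeartbeats 1000000
set_option maxHeartbeats 1000000

/-!
Since `a ≤ b + ‖a - b‖`, operator monotonicity of `f` followed by scalar subadditivity on the
spectrum of `b` gives `f(a) ≤ f(b + ‖a - b‖) ≤ f(b) + f(‖a - b‖)`. Exchanging `a` and `b` gives the
matching lower bound. For `f(x) = x ^ r` with `r ∈ [0, 1]`, operator monotonicity is the
Löwner–Heinz inequality.
-/

open Set
open scoped NNReal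

section CStarAlgebra

variable {E : Type*} [CStarAlgebra E] [PartialOrder E] [StarOrderedRing E]

lemma norm_le_of_mem_Icc_algebraMap {a : E} {c : ℝ} (hc : 0 ≤ c)
    (ha : a ∈ Icc (-algebraMap ℝ E c) (algebraMap ℝ E c)) : ‖a‖ ≤ c := by
  have ha_sa : IsSelfAdjoint a := by
    simpa only [sub_sub_cancel] using
      (IsSelfAdjoint.algebraMap E (.all c)).sub (.of_nonneg (sub_nonneg.2 ha.2))
  have h_lower : ∀ x ∈ spectrum ℝ a, -c ≤ x :=
    (algebraMap_le_iff_le_spectrum ha_sa).1 (by simpa only [map_neg] using ha.1)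
  have h_upper : ∀ x ∈ spectrum ℝ a, x ≤ c := (le_algebraMap_iff_spectrum_le ha_sa).1 ha.2
  rw [← cfc_id' ℝ a]
  exact norm_cfc_le hc fun x hx ↦ abs_le.2 ⟨h_lower x hx, h_upper x hx⟩

variable {a b : E} {f : ℝ≥0 → ℝ≥0}

lemma cfc_add_algebraMap_le (hf : Continuous f) (hf_add : ∀ x y, f (x + y) ≤ f x + f y)
    (ha : 0 ≤ a) (c : ℝ≥0) :
    cfc f (a + algebraMap ℝ≥0 E c) ≤ cfc f a + algebraMap ℝ≥0 E (f c) :=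
  calc
    cfc f (a + algebraMap ℝ≥0 E c) = cfc (fun x ↦ f (x + c)) a := by
      rw [cfc_comp' f (· + c) a, cfc_add_const c (fun x ↦ x) a, cfc_id' ℝ≥0 a]
    _ ≤ cfc (fun x ↦ f x + f c) a := cfc_mono fun x _ ↦ hf_add x c
    _ = cfc f a + algebraMap ℝ≥0 E (f c) := cfc_add_const (f c) f a

lemma cfc_sub_cfc_le_algebraMap (hf : Continuous f) (hf_add : ∀ x y, f (x + y) ≤ f x + f y)
    (hf_mono : MonotoneOn (cfc f : E → E) (Ici 0)) (ha : 0 ≤ a) (hb : 0 ≤ b) :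
    cfc f a - cfc f b ≤ algebraMap ℝ≥0 E (f ‖a - b‖₊) := by
  have hab : a ≤ b + algebraMap ℝ≥0 E ‖a - b‖₊ :=
    sub_le_iff_le_add'.1 (IsSelfAdjoint.le_algebraMap_norm_self (a := a - b))
  rw [sub_le_iff_le_add']
  calc
    cfc f a ≤ cfc f (b + algebraMap ℝ≥0 E ‖a - b‖₊) := hf_mono ha (ha.trans hab) hab
    _ ≤ cfc f b + algebraMap ℝ≥0 E (f ‖a - b‖₊) := cfc_add_algebraMap_le hf hf_add hb _

theorem nnnorm_cfc_sub_cfc_le (hf : Continuous f) (hf_add : ∀ x y, f (x + y) ≤ f x + f y)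
    (hf_mono : MonotoneOn (cfc f : E → E) (Ici 0)) (ha : 0 ≤ a) (hb : 0 ≤ b) :
    ‖cfc f a - cfc f b‖₊ ≤ f ‖a - b‖₊ := by
  refine norm_le_of_mem_Icc_algebraMap (f ‖a - b‖₊).coe_nonneg ⟨?_, ?_⟩
  · rw [neg_le, neg_sub, ← nnnorm_neg, neg_sub]
    exact cfc_sub_cfc_le_algebraMap hf hf_add hf_mono hb ha
  · exact cfc_sub_cfc_le_algebraMap hf hf_add hf_mono ha hb

theorem stmt_9_general {r : ℝ} (hr : r ∈ Icc 0 1) (ha : 0 ≤ a) (hb : 0 ≤ b) :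
    ‖a ^ r - b ^ r‖ ≤ ‖a - b‖ ^ r :=
  nnnorm_cfc_sub_cfc_le (NNReal.continuous_rpow_const hr.1)
    (fun x y ↦ NNReal.rpow_add_le_add_rpow x y hr.1 hr.2)
    ((CFC.monotone_rpow hr).monotoneOn _) ha hb

end CStarAlgebra

/-- If `A`, `B` are positive self-adjoint bounded operators on a Hilbert space and `r ∈ (0,1]`,
then `‖A^r − B^r‖ ≤ ‖A − B‖^r`. -/
theorem stmt_9 {H : Type*} [NormedAddCommGroup H] [InnerProductSpace ℂ H] [CompleteSpace H]
    (A B : H →L[ℂ] H) (hA : 0 ≤ A) (hB : 0 ≤ B) (r : ℝ) (hr0 : 0 < r) (hr1 : r ≤ 1) :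
    ‖CFC.rpow A r - CFC.rpow B r‖ ≤ ‖A - B‖ ^ r :=
  stmt_9_general ⟨hr0.le, hr1⟩ hA hB
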